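/- (Solution 3B of Table 1.) Let a ∈ ℂ and let P(λ,t) = 3λ⁴ − 4λ³ − 4λ³t + 6λ²t − t². Let U ⊆ ℂ be a nonempty open set and λ : U → ℂ a twice differentiable function such that for every t ∈ U one has t ∉ {0,1}, λ(t) ∉ {0,1,t}, P(λ(t),t) = 0, and ∂P/∂λ(λ(t),t) ≠ 0. Then λ is a solution of PVI_α with α = (9a, a, a, a). -/

import Mathlib

/-- `l : ℂ → ℂ` (viewed as a function on `U`) is a solution of the Painlevé VI equation
`PVI_α` with parameter `α = (α₀, α₁, α₂, α₃)`:  `l` is twice differentiable on `U`, for every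
`t ∈ U` one has `t ∉ {0,1}`, `l t ∉ {0,1,t}`, and the Painlevé VI ODE holds on `U`. -/
def IsPVISolution (α : Fin 4 → ℂ) (U : Set ℂ) (l : ℂ → ℂ) : Prop :=
  (∀ t ∈ U, DifferentiableAt ℂ l t) ∧
  (∀ t ∈ U, DifferentiableAt ℂ (deriv l) t) ∧
  (∀ t ∈ U, t ≠ 0 ∧ t ≠ 1 ∧ l t ≠ 0 ∧ l t ≠ 1 ∧ l t ≠ t) ∧
  (∀ t ∈ U, deriv (deriv l) t =
    (1 / 2) * (1 / l t + 1 / (l t - 1) + 1 / (l t - t)) * (deriv l t) ^ 2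
      - (1 / t + 1 / (t - 1) + 1 / (l t - t)) * deriv l t
      + (l t * (l t - 1) * (l t - t)) / (t ^ 2 * (t - 1) ^ 2) *
        (α 0 - α 1 * t / (l t) ^ 2 + α 2 * (t - 1) / (l t - 1) ^ 2
          + (1 / 2 - α 3) * (t * (t - 1)) / (l t - t) ^ 2))

open Polynomial

/-- The polynomial `P(λ, t)` of the table, as a polynomial in `λ` (the variable `X`)
with coefficients depending on `t`. -/
noncomputable def P (t : ℂ) : Polynomial ℂ := C 3 * X ^ 4 - C 4 * X ^ 3 - C (4 * t) * X ^ 3 + C (6 * t) * X ^ 2 - C (t ^ 2)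

/-- Implicit differentiation of `P t (l t) = 0`. -/
theorem deriv_of_eval_P_eq_zero {U : Set ℂ} (hU : IsOpen U) {l : ℂ → ℂ}
    (hdiff : ∀ t ∈ U, DifferentiableAt ℂ l t) (heq : ∀ t ∈ U, (P t).eval (l t) = 0)
    {t : ℂ} (ht : t ∈ U) :
    6 * (l t * (l t - 1) * (l t - t)) * deriv l t = 2 * l t ^ 3 - 3 * l t ^ 2 + t := by
  have hl := (hdiff t ht).hasDerivAt
  have hid := hasDerivAt_id t
  have hF := ((((hl.pow 4).const_mul 3).sub ((hl.pow 3).const_mul 4)).sub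
    ((hid.const_mul 4).mul (hl.pow 3))).add ((hid.const_mul 6).mul (hl.pow 2)) |>.sub (hid.pow 2)
  have hzero : HasDerivAt (fun _ : ℂ => (0 : ℂ)) 0 t := hasDerivAt_const t 0
  have h := hF.unique (hzero.congr_of_eventuallyEq (by
    filter_upwards [hU.mem_nhds ht] with s hs
    simpa [P] using heq s hs))
  simp at h
  linear_combination h / 2

/-- Second implicit differentiation of `P t (l t) = 0`. -/
theorem deriv_deriv_of_eval_P_eq_zero {U : Set ℂ} (hU : IsOpen U) {l : ℂ → ℂ}
    (hdiff : ∀ t ∈ U, DifferentiableAt ℂ l t)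
    (hdiff2 : ∀ t ∈ U, DifferentiableAt ℂ (deriv l) t)
    (heq : ∀ t ∈ U, (P t).eval (l t) = 0) {t : ℂ} (ht : t ∈ U) :
    6 * (l t * (l t - 1) * (l t - t)) * deriv (deriv l) t =
      1 + 12 * (l t * (l t - 1)) * deriv l t
        - 6 * ((l t - 1) * (l t - t) + l t * (l t - t) + l t * (l t - 1)) * deriv l t ^ 2 := by
  have hl := (hdiff t ht).hasDerivAt
  have hl' := (hdiff2 t ht).hasDerivAt
  have hid := hasDerivAt_id t
  have hL := (((hl.mul (hl.sub_const 1)).mul (hl.sub hid)).const_mul 6).mul hl'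
  have hR := (((hl.pow 3).const_mul 2).sub ((hl.pow 2).const_mul 3)).add hid
  have h := hL.unique (hR.congr_of_eventuallyEq (by
    filter_upwards [hU.mem_nhds ht] with s hs
    simpa using deriv_of_eval_P_eq_zero hU hdiff heq hs))
  simp at h
  linear_combination h

/-- The coefficient of `a` in `PVI_(9a, a, a, a)` vanishes on the curve `P = 0`. -/
theorem potential_eq_zero {x t : ℂ} (hx : x ≠ 0) (hx1 : x ≠ 1) (hxt : x ≠ t)
    (h : 3 * x ^ 4 - 4 * x ^ 3 - 4 * t * x ^ 3 + 6 * t * x ^ 2 - t ^ 2 = 0) :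
    9 - t / x ^ 2 + (t - 1) / (x - 1) ^ 2 - t * (t - 1) / (x - t) ^ 2 = 0 := by
  have h1 := sub_ne_zero.mpr hx1
  have h2 := sub_ne_zero.mpr hxt
  field_simp
  linear_combination (3 * x ^ 2 - 2 * (1 + t) * x + t) * h

/-- The algebraic form of the Painlevé VI equation with `α = 0` on the curve `P = 0`. -/
theorem picard_eq {x t p q : ℂ} (ht : t ≠ 0) (ht1 : t ≠ 1)
    (hx : x ≠ 0) (hx1 : x ≠ 1) (hxt : x ≠ t)
    (h : 3 * x ^ 4 - 4 * x ^ 3 - 4 * t * x ^ 3 + 6 * t * x ^ 2 - t ^ 2 = 0)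
    (hp : 6 * (x * (x - 1) * (x - t)) * p = 2 * x ^ 3 - 3 * x ^ 2 + t)
    (hq : 6 * (x * (x - 1) * (x - t)) * q = 1 + 12 * (x * (x - 1)) * p
      - 6 * ((x - 1) * (x - t) + x * (x - t) + x * (x - 1)) * p ^ 2) :
    q = (1 / 2) * (1 / x + 1 / (x - 1) + 1 / (x - t)) * p ^ 2
      - (1 / t + 1 / (t - 1) + 1 / (x - t)) * p
      + (x * (x - 1) * (x - t)) / (t ^ 2 * (t - 1) ^ 2) *
        (1 / 2 * (t * (t - 1)) / (x - t) ^ 2) := by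
  have h1 := sub_ne_zero.mpr hx1
  have h2 := sub_ne_zero.mpr hxt
  have h3 := sub_ne_zero.mpr ht1
  have hD : x * (x - 1) * (x - t) ≠ 0 := mul_ne_zero (mul_ne_zero hx h1) h2
  have key : 4 * (x * (x - 1) * (x - t)) ^ 2 * (t * (t - 1)
      + 18 * (x * (x - 1)) * (t * (t - 1)) * p
      - 9 * ((x - 1) * (x - t) + x * (x - t) + x * (x - 1)) * (t * (t - 1)) * p ^ 2
      + 6 * (x * (x - 1) * (x - t)) * (2 * t - 1) * p - 3 * (x * (x - 1)) ^ 2) = 0 := by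
    linear_combination
      (12 * (x * (x - 1)) * (t * (t - 1)) * (x * (x - 1) * (x - t))
        - ((x - 1) * (x - t) + x * (x - t) + x * (x - 1)) * (t * (t - 1)) *
          (6 * (x * (x - 1) * (x - t)) * p + (2 * x ^ 3 - 3 * x ^ 2 + t))
        + 4 * (x * (x - 1) * (x - t)) ^ 2 * (2 * t - 1)) * hp
      + (-t ^ 2 + t ^ 3 + 2 * x * t - 2 * x * t ^ 3 - 7 * x ^ 2 * t + 3 * x ^ 2 * t ^ 2
        + 16 * x ^ 3 * t - 4 * x ^ 4 - 20 * x ^ 4 * t + 8 * x ^ 5 + 8 * x ^ 5 * t - 4 * x ^ 6) * h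
  have key' := (mul_eq_zero.mp key).resolve_left (mul_ne_zero (by norm_num) (pow_ne_zero 2 hD))
  have hq' : q = (1 + 12 * (x * (x - 1)) * p
      - 6 * ((x - 1) * (x - t) + x * (x - t) + x * (x - 1)) * p ^ 2)
      / (6 * (x * (x - 1) * (x - t))) := by
    rw [eq_div_iff (mul_ne_zero (by norm_num) hD), ← hq]
    ring
  rw [hq']
  field_simp
  linear_combination 2 * key'

theorem stmt7 (a : ℂ)
    (U : Set ℂ) (hU : U.Nonempty) (hUopen : IsOpen U) (l : ℂ → ℂ)
    (hdiff : ∀ t ∈ U, DifferentiableAt ℂ l t)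
    (hdiff2 : ∀ t ∈ U, DifferentiableAt ℂ (deriv l) t)
    (hreg : ∀ t ∈ U, t ≠ 0 ∧ t ≠ 1 ∧ l t ≠ 0 ∧ l t ≠ 1 ∧ l t ≠ t)
    (heq : ∀ t ∈ U, (P t).eval (l t) = 0)
    (hder : ∀ t ∈ U, (Polynomial.derivative (P t)).eval (l t) ≠ 0) :
    IsPVISolution ![9 * a, a, a, a] U l := by
  refine ⟨hdiff, hdiff2, hreg, fun t ht => ?_⟩
  obtain ⟨ht0, ht1, hx, hx1, hxt⟩ := hreg t ht
  have h : 3 * l t ^ 4 - 4 * l t ^ 3 - 4 * t * l t ^ 3 + 6 * t * l t ^ 2 - t ^ 2 = 0 := by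
    simpa [P] using heq t ht
  have hpot := potential_eq_zero hx hx1 hxt h
  have hpic := picard_eq ht0 ht1 hx hx1 hxt h (deriv_of_eval_P_eq_zero hUopen hdiff heq ht)
    (deriv_deriv_of_eval_P_eq_zero hUopen hdiff hdiff2 heq ht)
  simp only [Matrix.cons_val]
  linear_combination hpic
    - (l t * (l t - 1) * (l t - t)) / (t ^ 2 * (t - 1) ^ 2) * a * hpot
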